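/- arXiv:2006.10324 — 2 statements merged into one kernel-verified Lean document; each statement's English description precedes it below -/
import Mathlib

section
/- Let F be a field of characteristic different from 2, V an F-vector space of dimension 8, and X : V³ → V an alternating 3-fold cross product relative to a nondegenerate symmetric bilinear form b. Then for all x, y, v ∈ V: X(x, y, X(x, y, v)) = (b(x,x)b(y,v) − b(y,x)b(x,v))·y − (b(x,y)b(y,v) − b(y,y)b(x,v))·x − (b(x,x)b(y,y) − b(x,y)b(y,x))·v. Consequently, the linear operator T : v ↦ X(x, y, v) satisfies T³ = −(b(x,x)b(y,y) − b(x,y)²)·T. -/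
/-- An `r`-fold cross product on `V` relative to the bilinear form `b`. -/
def IsCrossProduct {F V : Type*} [Field F] [AddCommGroup V] [Module F V] {r : ℕ}
    (b : LinearMap.BilinForm F V) (X : MultilinearMap F (fun _ : Fin r => V) V) : Prop :=
  (∀ v : Fin r → V, ∀ i : Fin r, b (X v) (v i) = 0) ∧
  (∀ v : Fin r → V, b (X v) (X v) = (Matrix.of fun i j : Fin r => b (v i) (v j)).det)

/-!
Fix all arguments of the cross product `X` except the `i`-th, and let `T` be the resulting linear
operator. Orthogonality makes `T` skew-adjoint, and polarizing the determinant axiom expresses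
`b (T v) (T w)` as a Gram determinant. Hence `b (T (T v)) w = -b (T v) (T w)` is known for every
`w`: it is the expansion of that determinant along the `i`-th column, the only one containing `w`.
Nondegeneracy then gives `T (T v)` as a combination of `v` and the fixed vectors, with cofactors of
the Gram matrix as coefficients. Pairing this with `T w`, which is orthogonal to the fixed vectors,
leaves only the diagonal cofactor and yields the identity for `T ^ 3`.
-/

open Function Matrix

section GramDeterminant

variable {ι R M : Type*} [CommRing R] [AddCommGroup M] [Module R M]

/-- The Gram matrix of a family of vectors, whose cofactors are the coefficients in the formulas for
iterated cross products. -/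
def gramMatrix (b : LinearMap.BilinForm R M) (m : ι → M) : Matrix ι ι R :=
  of fun j k => b (m j) (m k)

variable [Fintype ι] [DecidableEq ι]

/-- The mixed Gram determinant `det (b (m j) (n k))` of two families of vectors, bundled as a
multilinear map in `m`: polarization of the cross product axiom varies one vector of each family. -/
def gramDet (b : LinearMap.BilinForm R M) (n : ι → M) : MultilinearMap R (fun _ : ι => M) R :=
  detRowAlternating.toMultilinearMap.compLinearMap fun _ => LinearMap.pi fun k => b.flip (n k)

lemma gramDet_apply (b : LinearMap.BilinForm R M) (n m : ι → M) :
    gramDet b n m = (of fun j k => b (m j) (n k)).det :=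
  rfl

lemma gramDet_comm {b : LinearMap.BilinForm R M} (hb : b.IsSymm) (n m : ι → M) :
    gramDet b n m = gramDet b m n := by
  rw [gramDet_apply, ← det_transpose, gramDet_apply]
  congr 1
  ext j k
  exact hb.eq _ _

lemma gramDet_update_eq_sum_adjugate (b : LinearMap.BilinForm R M) (m : ι → M) (i : ι) (w : M) :
    gramDet b (update m i w) m = ∑ j, (gramMatrix b m).adjugate i j * b (m j) w := by
  have hcol : (of fun j k => b (m j) (update m i w k)) =
      (gramMatrix b m).updateCol i fun j => b (m j) w := by
    ext j k
    rcases eq_or_ne k i with rfl | hk <;> simp [gramMatrix, *]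
  rw [gramDet_apply, hcol, ← cramer_apply, cramer_eq_adjugate_mulVec, mulVec_eq_sum]
  simp [mul_comm]

end GramDeterminant

namespace IsCrossProduct

variable {F V : Type*} [Field F] [AddCommGroup V] [Module F V] {r : ℕ}
  {b : LinearMap.BilinForm F V} {X : MultilinearMap F (fun _ : Fin r => V) V}

lemma bilin_apply_update_eq_neg_swap (hX : IsCrossProduct b X) (m : Fin r → V) (i : Fin r)
    (v w : V) :
    b (X (update m i v)) w = -b (X (update m i w)) v := by
  have horth (u : V) : b (X (update m i u)) u = 0 := by
    simpa only [update_self] using hX.1 (update m i u) i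
  have hadd := horth (v + w)
  simp only [MultilinearMap.map_update_add, map_add, LinearMap.add_apply, horth] at hadd
  linear_combination hadd

lemma bilin_apply_update_apply_update_eq_gramDet (hX : IsCrossProduct b X) (h2 : (2 : F) ≠ 0)
    (hb : b.IsSymm) (m : Fin r → V) (i : Fin r) (v w : V) :
    b (X (update m i v)) (X (update m i w)) = gramDet b (update m i w) (update m i v) := by
  have hdiag (u : V) : b (X (update m i u)) (X (update m i u)) =
      gramDet b (update m i u) (update m i u) :=
    hX.2 (update m i u)
  have hadd := hdiag (v + w)
  rw [MultilinearMap.map_update_add, MultilinearMap.map_update_add,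
    gramDet_comm hb (update m i (v + w)) (update m i v),
    gramDet_comm hb (update m i (v + w)) (update m i w)] at hadd
  simp only [MultilinearMap.map_update_add, map_add, LinearMap.add_apply, hdiag,
    hb.eq (X (update m i w)) (X (update m i v)),
    gramDet_comm hb (update m i v) (update m i w)] at hadd
  apply mul_left_cancel₀ h2
  linear_combination hadd

theorem apply_update_apply_eq_neg_sum_smul (hX : IsCrossProduct b X) (h2 : (2 : F) ≠ 0)
    (hb : b.IsSymm) (hnd : b.Nondegenerate) (m : Fin r → V) (i : Fin r) :
    X (update m i (X m)) = -∑ j, (gramMatrix b m).adjugate i j • m j := by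
  refine eq_neg_of_add_eq_zero_left (hnd.1 _ fun w => ?_)
  have hgram : b (X (update m i (X m))) w = -gramDet b (update m i w) m :=
    calc b (X (update m i (X m))) w
      _ = -b (X (update m i w)) (X m) := hX.bilin_apply_update_eq_neg_swap m i (X m) w
      _ = -b (X m) (X (update m i w)) := by rw [hb.eq]
      _ = -gramDet b (update m i w) m := by
        simpa only [update_eq_self] using
          congrArg Neg.neg (hX.bilin_apply_update_apply_update_eq_gramDet h2 hb m i (m i) w)
  rw [map_add, LinearMap.add_apply, hgram, gramDet_update_eq_sum_adjugate]
  simp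

theorem apply_update_apply_update_apply_eq_neg_smul (hX : IsCrossProduct b X) (h2 : (2 : F) ≠ 0)
    (hb : b.IsSymm) (hnd : b.Nondegenerate) (m : Fin r → V) (i : Fin r) :
    X (update m i (X (update m i (X m)))) = -((gramMatrix b m).adjugate i i • X m) := by
  refine eq_neg_of_add_eq_zero_left (hnd.1 _ fun w => ?_)
  set A := (gramMatrix b m).adjugate
  have horth (j : Fin r) (hj : j ≠ i) : b (m j) (X (update m i w)) = 0 := by
    simpa only [update_of_ne hj, hb.eq] using hX.1 (update m i w) j
  have hskew : b (m i) (X (update m i w)) = -b (X m) w := by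
    rw [hb.eq, hX.bilin_apply_update_eq_neg_swap, update_eq_self]
  have hcube : b (X (update m i (X (update m i (X m))))) w = -(A i i * b (X m) w) :=
    calc b (X (update m i (X (update m i (X m))))) w
      _ = -b (X (update m i (X m))) (X (update m i w)) := by
        rw [hX.bilin_apply_update_eq_neg_swap, hb.eq]
      _ = ∑ j, A i j * b (m j) (X (update m i w)) := by
        rw [hX.apply_update_apply_eq_neg_sum_smul h2 hb hnd]
        simp [A]
      _ = A i i * b (m i) (X (update m i w)) :=
        Fintype.sum_eq_single i fun j hj => by rw [horth j hj, mul_zero]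
      _ = -(A i i * b (X m) w) := by rw [hskew, mul_neg]
  simp [hcube]

end IsCrossProduct

theorem stmt6_general (F V : Type*) [Field F] [AddCommGroup V] [Module F V]
    (hchar : (2 : F) ≠ 0)
    (b : LinearMap.BilinForm F V)
    (hbnd : b.Nondegenerate) (hbsymm : ∀ u v : V, b u v = b v u)
    (X : MultilinearMap F (fun _ : Fin 3 => V) V)
    (hX : IsCrossProduct b X) :
    (∀ x y v : V,
      X ![x, y, X ![x, y, v]] =
        (b x x * b y v - b y x * b x v) • y
        - (b x y * b y v - b y y * b x v) • x
        - (b x x * b y y - b x y * b y x) • v) ∧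
    (∀ x y v : V,
      X ![x, y, X ![x, y, X ![x, y, v]]] =
        - ((b x x * b y y - (b x y) ^ 2) • X ![x, y, v])) := by
  have hupdate (x y v w : V) : update ![x, y, v] 2 w = ![x, y, w] := by
    ext j
    fin_cases j <;> rfl
  refine ⟨fun x y v => ?_, fun x y v => ?_⟩
  · have hsq := hX.apply_update_apply_eq_neg_sum_smul hchar ⟨hbsymm⟩ hbnd ![x, y, v] 2
    rw [hupdate, adjugate_fin_three, Fin.sum_univ_three] at hsq
    rw [hsq]
    simp only [gramMatrix, of_apply, cons_val, cons_val', cons_val_fin_one, hbsymm y x, hbsymm v x,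
      hbsymm v y]
    module
  · have hcube := hX.apply_update_apply_update_apply_eq_neg_smul hchar ⟨hbsymm⟩ hbnd
      ![x, y, v] 2
    rw [hupdate, hupdate, adjugate_fin_three] at hcube
    simpa [gramMatrix, hbsymm y x, pow_two] using hcube

/-- for an alternating 3-fold cross product on an 8-dimensional space,
`X(x,y,X(x,y,v))` is given by an explicit formula, and the operator `T : v ↦ X(x,y,v)`
satisfies `T³ = -(b(x,x)b(y,y) - b(x,y)²) • T`. -/
theorem stmt6 (F V : Type*) [Field F] [AddCommGroup V] [Module F V] [FiniteDimensional F V]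
    (hchar : (2 : F) ≠ 0)
    (hdim : Module.finrank F V = 8)
    (b : LinearMap.BilinForm F V)
    (hbnd : b.Nondegenerate) (hbsymm : ∀ u v : V, b u v = b v u)
    (X : MultilinearMap F (fun _ : Fin 3 => V) V)
    (halt : ∀ (v : Fin 3 → V) (i j : Fin 3), i ≠ j → v i = v j → X v = 0)
    (hX : IsCrossProduct b X) :
    (∀ x y v : V,
      X ![x, y, X ![x, y, v]] =
        (b x x * b y v - b y x * b x v) • y
        - (b x y * b y v - b y y * b x v) • x
        - (b x x * b y y - b x y * b y x) • v) ∧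
    (∀ x y v : V,
      X ![x, y, X ![x, y, X ![x, y, v]]] =
        - ((b x x * b y y - (b x y) ^ 2) • X ![x, y, v])) :=
  stmt6_general F V hchar b hbnd hbsymm X hX
end

section
/- Let F be an algebraically closed field of characteristic different from 2, V an F-vector space of dimension n ≥ 3, X : V^{n−1} → V an alternating (n−1)-fold cross product relative to a nondegenerate symmetric bilinear form b, G an abelian group, and V = ⊕_{g∈G} V_g a G-grading on (V, X). Let h = ∏_{g∈G} g^{dim V_g} (a finite product, as only finitely many V_g are nonzero). Then: (1) h^{n−2} = e, the neutral element of G; (2) b(V_{g₁}, V_{g₂}) = 0 whenever g₁g₂ ≠ h; and (3) dim V_g = dim V_{g⁻¹h} for every g ∈ G. -/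
/-!
Fix a basis `e` of homogeneous vectors, `e i` of degree `d i`, so that `h = ∏ i, d i`. The cross
product of all `e j` with `j ≠ i` is homogeneous of degree `(d i)⁻¹ * h` and orthogonal to every
`e j` with `j ≠ i`, so it is a multiple of the `i`-th vector of the `b`-dual basis of `e`. The
multiple is nonzero because `(v₀, …, vₘ) ↦ b (X (v₀, …, v̂ᵢ, …, vₘ)) vᵢ` is a nonzero alternating
form of top degree. Hence the dual basis is also homogeneous, with degrees `(d i)⁻¹ * h`. Reading
the grading off both bases gives the orthogonality relations and `dim V_g = dim V_{g⁻¹h}`, and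
comparing the products of their degrees gives `hⁿ = h²`.
-/

open Module

section HomogeneousBasis

variable {R K V G ι : Type*} [DecidableEq G]

section Ring

variable [Ring R] [AddCommGroup V] [Module R V] {𝒱 : G → Submodule R V}

lemma component_eq_span (h𝒱 : DirectSum.IsInternal 𝒱) (e : Basis ι R V) {d : ι → G}
    (he : ∀ i, e i ∈ 𝒱 (d i)) (g : G) : 𝒱 g = Submodule.span R (e '' {i | d i = g}) := by
  let 𝒲 : G → Submodule R V := fun g => Submodule.span R (e '' {i | d i = g})
  have h_le : 𝒲 ≤ 𝒱 := fun g => Submodule.span_le.mpr <| by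
    rintro _ ⟨i, rfl, rfl⟩
    exact he i
  have h_top : iSup 𝒲 = ⊤ := by
    rw [eq_top_iff, ← e.span_eq, Submodule.span_le]
    rintro _ ⟨i, rfl⟩
    exact Submodule.mem_iSup_of_mem (d i) (Submodule.subset_span ⟨i, rfl, rfl⟩)
  exact (congrFun
    ((h𝒱.submodule_iSupIndep.le_iff_eq_of_iSup_eq_top h_top).mp h_le) g).symm

variable [StrongRankCondition R] [Fintype ι]

lemma finrank_component (h𝒱 : DirectSum.IsInternal 𝒱) (e : Basis ι R V) {d : ι → G}
    (he : ∀ i, e i ∈ 𝒱 (d i)) (g : G) :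
    finrank R (𝒱 g) = Finset.card {i | d i = g} := by
  have : Nontrivial R := nontrivial_of_invariantBasisNumber R
  have h_li : LinearIndependent R fun i : {i // d i = g} => e i :=
    e.linearIndependent.comp _ Subtype.val_injective
  rw [component_eq_span h𝒱 e he g, Set.image_eq_range, ← Fintype.card_subtype]
  exact finrank_span_eq_card h_li

lemma finprod_pow_finrank_component [CommMonoid G] (h𝒱 : DirectSum.IsInternal 𝒱)
    (e : Basis ι R V) {d : ι → G} (he : ∀ i, e i ∈ 𝒱 (d i)) :
    ∏ᶠ g, g ^ finrank R (𝒱 g) = ∏ i, d i := by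
  simp_rw [finrank_component h𝒱 e he]
  have h_supp : (Function.mulSupport fun g => g ^ Finset.card {i | d i = g}) ⊆
      (Finset.univ.image d : Finset G) := by
    refine Function.mulSupport_subset_iff'.mpr fun g hg => ?_
    have h_empty : Finset.card {i | d i = g} = 0 := by simpa using hg
    rw [h_empty, pow_zero]
  rw [finprod_eq_prod_of_mulSupport_subset _ h_supp]
  exact (Finset.prod_comp id d).symm

end Ring

lemma exists_homogeneous_basis [DivisionRing K] [AddCommGroup V] [Module K V]
    [FiniteDimensional K V] {𝒱 : G → Submodule K V} (h𝒱 : DirectSum.IsInternal 𝒱) {n : ℕ}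
    (hn : finrank K V = n) :
    ∃ (e : Basis (Fin n) K V) (d : Fin n → G), ∀ i, e i ∈ 𝒱 (d i) := by
  let B := h𝒱.collectedBasis fun g => finBasis K (𝒱 g)
  let σ := B.indexEquiv (finBasisOfFinrankEq K V hn)
  refine ⟨B.reindex σ, fun i => (σ.symm i).1, fun i => ?_⟩
  rw [Basis.reindex_apply]
  exact h𝒱.collectedBasis_mem _ _

end HomogeneousBasis

section HomogeneousDualBasis

variable {F V G ι : Type*} [Field F] [AddCommGroup V] [Module F V] [CommGroup G] [DecidableEq G]
  [DecidableEq ι] {𝒱 : G → Submodule F V} {b : LinearMap.BilinForm F V}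
  {e : Basis ι F V} {d : ι → G} {h : G}

lemma apply_eq_zero_of_mul_ne [Finite ι] (h𝒱 : DirectSum.IsInternal 𝒱) (hb : b.Nondegenerate)
    (he : ∀ i, e i ∈ 𝒱 (d i)) (he' : ∀ i, b.dualBasis hb e i ∈ 𝒱 ((d i)⁻¹ * h))
    {g₁ g₂ : G} (hg : g₁ * g₂ ≠ h) {u v : V} (hu : u ∈ 𝒱 g₁) (hv : v ∈ 𝒱 g₂) : b u v = 0 := by
  rw [component_eq_span h𝒱 _ he'] at hu
  rw [component_eq_span h𝒱 _ he] at hv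
  refine (Submodule.mem_bot F).mp
    (LinearMap.BilinMap.apply_apply_mem_of_mem_span ⊥ _ _ b ?_ u v hu hv)
  rintro _ ⟨i, rfl, rfl⟩ _ ⟨j, rfl, rfl⟩
  have hji : j ≠ i := by
    rintro rfl
    exact hg (by rw [mul_comm, mul_inv_cancel_left])
  rw [LinearMap.BilinForm.apply_dualBasis_left, if_neg hji]
  exact Submodule.zero_mem _

lemma finrank_component_inv_mul [Finite ι] (h𝒱 : DirectSum.IsInternal 𝒱)
    (hb : b.Nondegenerate) (he : ∀ i, e i ∈ 𝒱 (d i))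
    (he' : ∀ i, b.dualBasis hb e i ∈ 𝒱 ((d i)⁻¹ * h)) (g : G) :
    finrank F (𝒱 (g⁻¹ * h)) = finrank F (𝒱 g) := by
  have : Fintype ι := Fintype.ofFinite ι
  rw [finrank_component h𝒱 _ he', finrank_component h𝒱 e he]
  simp only [mul_left_inj, inv_inj]

lemma pow_card_eq_prod_degree_sq [Fintype ι] (h𝒱 : DirectSum.IsInternal 𝒱)
    (hb : b.Nondegenerate) (he : ∀ i, e i ∈ 𝒱 (d i))
    (he' : ∀ i, b.dualBasis hb e i ∈ 𝒱 ((d i)⁻¹ * h)) :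
    h ^ Fintype.card ι = (∏ i, d i) ^ 2 := by
  have h_deg : ∏ i, d i = (∏ i, d i)⁻¹ * h ^ Fintype.card ι := calc
    ∏ i, d i = ∏ᶠ g, g ^ finrank F (𝒱 g) := (finprod_pow_finrank_component h𝒱 e he).symm
    _ = ∏ i, (d i)⁻¹ * h := finprod_pow_finrank_component h𝒱 _ he'
    _ = (∏ i, d i)⁻¹ * h ^ Fintype.card ι := by
      rw [Finset.prod_mul_distrib, Finset.prod_inv_distrib, Finset.prod_const, Finset.card_univ]
  rw [sq, eq_inv_mul_iff_mul_eq.mp h_deg]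

end HomogeneousDualBasis

section Multilinear

variable {R M N ι : Type*} [Semiring R] [AddCommMonoid M] [Module R M] [AddCommMonoid N]
  [Module R N]

-- Polarizing in the slots `i` and `k` shows that `f` changes sign when they are swapped, and the
-- swapped family has equal entries in the slots `j` and `k`.
lemma map_eq_zero_of_eq_of_forall_eq_slot (f : MultilinearMap R (fun _ : ι => M) N) (k : ι)
    (hf : ∀ v i, i ≠ k → v i = v k → f v = 0) (v : ι → M) {i j : ι} (hij : i ≠ j)
    (hv : v i = v j) : f v = 0 := by
  classical
  rcases eq_or_ne i k with rfl | hik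
  · exact hf v j hij.symm hv.symm
  rcases eq_or_ne j k with rfl | hjk
  · exact hf v i hij hv
  let u : M → M → ι → M := fun x y => Function.update (Function.update v i x) k y
  have h_add_left : ∀ x x' y, f (u (x + x') y) = f (u x y) + f (u x' y) := fun x x' y => by
    simp only [u, Function.update_comm hik, f.map_update_add]
  have h_add_right : ∀ x y y', f (u x (y + y')) = f (u x y) + f (u x y') := fun x y y' =>
    f.map_update_add _ _ _ _
  have h_diag : ∀ x, f (u x x) = 0 := fun x => hf _ i hik (by simp [u, hik])
  have h_swap : f (u (v k) (v i)) = 0 := hf _ j hjk (by simp [u, hij.symm, hjk, hv])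
  have h_self : u (v i) (v k) = v := by simp [u]
  simpa [h_add_left, h_add_right, h_diag, h_swap, h_self] using h_diag (v i + v k)

end Multilinear

section CrossProduct

variable {F V : Type*} [Field F] [AddCommGroup V] [Module F V] {b : LinearMap.BilinForm F V}

lemma exists_det_gram_ne_zero [FiniteDimensional F V] (h2 : (2 : F) ≠ 0) (hb : b.Nondegenerate)
    (hsymm : b.IsSymm) {r : ℕ} (hr : r ≤ finrank F V) :
    ∃ v : Fin r → V, (Matrix.of fun i j => b (v i) (v j)).det ≠ 0 := by
  have : Invertible (2 : F) := invertibleOfNonzero h2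
  obtain ⟨e, he⟩ := LinearMap.BilinForm.exists_orthogonal_basis
    (LinearMap.BilinForm.isSymm_iff.mp hsymm)
  let v : Fin r → V := fun i => e (Fin.castLE hr i)
  have h_diag : (Matrix.of fun i j => b (v i) (v j)) = Matrix.diagonal fun i => b (v i) (v i) := by
    ext i j
    rcases eq_or_ne i j with rfl | hij
    · simp
    · rw [Matrix.diagonal_apply_ne _ hij, Matrix.of_apply]
      exact he ((Fin.castLE_injective hr).ne hij)
  refine ⟨v, ?_⟩
  rw [h_diag, Matrix.det_diagonal]
  exact Finset.prod_ne_zero_iff.mpr fun i _ => he.not_isOrtho_basis_self_of_separatingLeft hb.1 _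

namespace IsCrossProduct

lemma ne_zero [FiniteDimensional F V] (h2 : (2 : F) ≠ 0) (hb : b.Nondegenerate)
    (hsymm : b.IsSymm) {r : ℕ} (hr : r ≤ finrank F V)
    {X : MultilinearMap F (fun _ : Fin r => V) V} (hX : IsCrossProduct b X) : X ≠ 0 := by
  rintro rfl
  obtain ⟨v, hv⟩ := exists_det_gram_ne_zero h2 hb hsymm hr
  exact hv (by simp [← hX.2 v])

variable {m : ℕ} {X : MultilinearMap F (fun _ : Fin m => V) V}

/-- The alternating form `(v₀, …, vₘ) ↦ b (X (v₀, …, v̂ᵢ, …, vₘ)) vᵢ` of an `m`-fold cross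
product `X`, where the hat marks the omitted argument. -/
def alternatingForm (hX : IsCrossProduct b X) (i : Fin (m + 1)) : V [⋀^Fin (m + 1)]→ₗ[F] F where
  toMultilinearMap := LinearMap.uncurryMid i
    { toFun := fun x => (b.flip x).compMultilinearMap X
      map_add' := fun x y => by ext; simp
      map_smul' := fun c x => by ext; simp }
  map_eq_zero_of_eq' v j k hv hjk := by
    refine map_eq_zero_of_eq_of_forall_eq_slot _ i (fun v j hji hv => ?_) v hjk hv
    obtain ⟨l, rfl⟩ := Fin.exists_succAbove_eq hji
    change b (X (i.removeNth v)) (v i) = 0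
    rw [← hv]
    exact hX.1 (i.removeNth v) l

lemma alternatingForm_apply (hX : IsCrossProduct b X) (i : Fin (m + 1)) (v : Fin (m + 1) → V) :
    hX.alternatingForm i v = b (X (i.removeNth v)) (v i) :=
  rfl

lemma alternatingForm_ne_zero (hX : IsCrossProduct b X) (hb : b.Nondegenerate) (hX0 : X ≠ 0)
    (i : Fin (m + 1)) : hX.alternatingForm i ≠ 0 := by
  contrapose! hX0
  ext v
  refine hb.1 _ fun x => ?_
  simpa [alternatingForm_apply] using DFunLike.congr_fun hX0 (i.insertNth x v)

lemma apply_removeNth_basis (hX : IsCrossProduct b X) (hb : b.Nondegenerate)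
    (e : Basis (Fin (m + 1)) F V) (i : Fin (m + 1)) :
    X (i.removeNth e) = hX.alternatingForm i e • b.dualBasis hb e i := by
  refine (b.dualBasis hb e).ext_elem fun j => ?_
  rcases Fin.eq_self_or_eq_succAbove i j with rfl | ⟨k, rfl⟩
  · simp [alternatingForm_apply]
  · simpa [Fin.removeNth_apply] using hX.1 (i.removeNth e) k

lemma dualBasis_mem (hX : IsCrossProduct b X) (hb : b.Nondegenerate) (hX0 : X ≠ 0)
    {G : Type*} [CommGroup G] {𝒱 : G → Submodule F V}
    (hgraded : ∀ (g : Fin m → G) (v : Fin m → V), (∀ i, v i ∈ 𝒱 (g i)) → X v ∈ 𝒱 (∏ i, g i))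
    {e : Basis (Fin (m + 1)) F V} {d : Fin (m + 1) → G} (he : ∀ i, e i ∈ 𝒱 (d i))
    (i : Fin (m + 1)) : b.dualBasis hb e i ∈ 𝒱 ((d i)⁻¹ * ∏ j, d j) := by
  have h_ne : hX.alternatingForm i e ≠ 0 :=
    (AlternatingMap.map_basis_ne_zero_iff e _).mpr (hX.alternatingForm_ne_zero hb hX0 i)
  rw [← Submodule.smul_mem_iff _ h_ne, ← hX.apply_removeNth_basis hb e i,
    Fin.prod_univ_succAbove d i, inv_mul_cancel_left]
  exact hgraded _ _ fun k => he _

end IsCrossProduct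

end CrossProduct

theorem stmt15_general {F V : Type*} [Field F] [AddCommGroup V] [Module F V]
    (h2 : (2 : F) ≠ 0) {m : ℕ} (hdim : finrank F V = m + 2)
    {b : LinearMap.BilinForm F V} (hb : b.Nondegenerate) (hsymm : b.IsSymm)
    {X : MultilinearMap F (fun _ : Fin (m + 1) => V) V} (hX : IsCrossProduct b X)
    {G : Type*} [CommGroup G] [DecidableEq G] {𝒱 : G → Submodule F V}
    (h𝒱 : DirectSum.IsInternal 𝒱)
    (hgraded : ∀ (g : Fin (m + 1) → G) (v : Fin (m + 1) → V),
      (∀ i, v i ∈ 𝒱 (g i)) → X v ∈ 𝒱 (∏ i, g i)) :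
    (∏ᶠ g : G, g ^ finrank F (𝒱 g)) ^ m = 1 ∧
    (∀ g₁ g₂ : G, g₁ * g₂ ≠ ∏ᶠ g : G, g ^ finrank F (𝒱 g) →
      ∀ u ∈ 𝒱 g₁, ∀ v ∈ 𝒱 g₂, b u v = 0) ∧
    ∀ g : G, finrank F (𝒱 g) = finrank F (𝒱 (g⁻¹ * ∏ᶠ g' : G, g' ^ finrank F (𝒱 g'))) := by
  have : FiniteDimensional F V := finite_of_finrank_eq_succ hdim
  have hX0 : X ≠ 0 := hX.ne_zero h2 hb hsymm (by omega)
  obtain ⟨e, d, he⟩ := exists_homogeneous_basis h𝒱 hdim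
  have he' := hX.dualBasis_mem hb hX0 hgraded he
  rw [finprod_pow_finrank_component h𝒱 e he]
  refine ⟨?_, fun g₁ g₂ hg u hu v hv => apply_eq_zero_of_mul_ne h𝒱 hb he he' hg hu hv,
    fun g => (finrank_component_inv_mul h𝒱 hb he he' g).symm⟩
  have h_pow := pow_card_eq_prod_degree_sq h𝒱 hb he he'
  rwa [Fintype.card_fin, pow_add, mul_eq_right] at h_pow

/-- for a `G`-grading `V = ⊕ V_g` of an alternating `(n-1)`-fold cross
product and `h = ∏_g g^(dim V_g)`, one has `h^(n-2) = 1`, `b(V_{g₁}, V_{g₂}) = 0` unless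
`g₁g₂ = h`, and `dim V_g = dim V_{g⁻¹h}` for all `g`. -/
theorem stmt15 (F V : Type*) [Field F] [IsAlgClosed F] [AddCommGroup V] [Module F V] [FiniteDimensional F V]
    (hchar : (2 : F) ≠ 0)
    (n : ℕ) (hn : 3 ≤ n) (hdim : finrank F V = n)
    (b : LinearMap.BilinForm F V)
    (hbnd : b.Nondegenerate) (hbsymm : ∀ u v : V, b u v = b v u)
    (X : MultilinearMap F (fun _ : Fin (n - 1) => V) V)
    (halt : ∀ (v : Fin (n - 1) → V) (i j : Fin (n - 1)), i ≠ j → v i = v j → X v = 0)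
    (hX : IsCrossProduct b X)
    (G : Type*) [CommGroup G] [DecidableEq G]
    (𝒱 : G → Submodule F V)
    (hinternal : DirectSum.IsInternal 𝒱)
    (hgraded : ∀ (g : Fin (n - 1) → G) (v : Fin (n - 1) → V),
      (∀ i, v i ∈ 𝒱 (g i)) → X v ∈ 𝒱 (∏ i, g i)) :
    (∏ᶠ g : G, g ^ (finrank F ↥(𝒱 g))) ^ (n - 2) = 1 ∧
    (∀ g₁ g₂ : G, g₁ * g₂ ≠ ∏ᶠ g : G, g ^ (finrank F ↥(𝒱 g)) →
      ∀ u ∈ 𝒱 g₁, ∀ v ∈ 𝒱 g₂, b u v = 0) ∧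
    (∀ g : G, finrank F ↥(𝒱 g) =
      finrank F ↥(𝒱 (g⁻¹ * ∏ᶠ g' : G, g' ^ (finrank F ↥(𝒱 g'))))) := by
  obtain ⟨m, rfl⟩ := Nat.exists_eq_add_of_le' (Nat.le_of_succ_le hn)
  exact stmt15_general hchar hdim hbnd ⟨hbsymm⟩ hX hinternal hgraded
end
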